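/- Let A, B, C be a nondegenerate triangle in the Euclidean plane with side lengths a = dist B C, b = dist C A, c = dist A B. Let M₁ = midpoint(B,C), M₂ = midpoint(C,A), M₃ = midpoint(A,B) be the vertices of the medial triangle, O the circumcenter, H the orthocenter, E = midpoint(O, H) the nine-point center, Sp the Spieker point (the incenter of the medial triangle, i.e. the barycentric combination of M₁, M₂, M₃ with weights (a, b, c)), and let M₁' = 2•E − M₁, M₂' = 2•E − M₂, M₃' = 2•E − M₃ be the antipodes of M₁, M₂, M₃ on the circumcircle of the medial triangle. Then there exists a nonzero real polynomial in two variables of total degree at most 3 vanishing at all ten points: M₁, M₂, M₃, M₁', M₂', M₃', Sp, E, O, H. -/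

import Mathlib

open EuclideanGeometry RealInnerProductSpace

/-- The barycentric combination of three points with weights `u, v, w`. -/
noncomputable def bary (P Q R : EuclideanSpace ℝ (Fin 2)) (u v w : ℝ) :
    EuclideanSpace ℝ (Fin 2) :=
  (u / (u + v + w)) • P + (v / (u + v + w)) • Q + (w / (u + v + w)) • R

/-- Evaluation of a two-variable real polynomial at a point of the plane. -/
noncomputable def mvEval (f : MvPolynomial (Fin 2) ℝ)
    (p : EuclideanSpace ℝ (Fin 2)) : ℝ :=
  MvPolynomial.eval (fun i => p i) f

noncomputable def linP (p q r : ℝ) : MvPolynomial (Fin 2) ℝ :=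
  MvPolynomial.C p * MvPolynomial.X 0 + MvPolynomial.C q * MvPolynomial.X 1 + MvPolynomial.C r

lemma linP_deg (p q r : ℝ) : (linP p q r).totalDegree ≤ 1 := by
  unfold linP
  refine (MvPolynomial.totalDegree_add _ _).trans (max_le ((MvPolynomial.totalDegree_add _ _).trans
    (max_le ?_ ?_)) ?_)
  · refine (MvPolynomial.totalDegree_mul _ _).trans ?_
    simp
  · refine (MvPolynomial.totalDegree_mul _ _).trans ?_
    simp
  · simp

lemma lin_deg_C (p q r k : ℝ) : (linP p q r * MvPolynomial.C k).totalDegree ≤ 3 := by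
  refine (MvPolynomial.totalDegree_mul _ _).trans ?_
  have := linP_deg p q r
  simp only [MvPolynomial.totalDegree_C]
  omega

noncomputable def cub (u0 u1 v0 v1 w0 w1 e0 e1 α β γ : ℝ) : MvPolynomial (Fin 2) ℝ :=
  linP (4*u0) (4*u1) (-4*(e0*u0+e1*u1)) * linP (4*v0) (4*v1) (-4*(e0*v0+e1*v1)) *
    linP (4*w0) (4*w1) (-4*(e0*w0+e1*w1))
  + linP (4*u0) (4*u1) (-4*(e0*u0+e1*u1)) * MvPolynomial.C (β*γ)
  + linP (4*v0) (4*v1) (-4*(e0*v0+e1*v1)) * MvPolynomial.C (α*γ)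
  + linP (4*w0) (4*w1) (-4*(e0*w0+e1*w1)) * MvPolynomial.C (α*β)

lemma cub_deg (u0 u1 v0 v1 w0 w1 e0 e1 α β γ : ℝ) :
    (cub u0 u1 v0 v1 w0 w1 e0 e1 α β γ).totalDegree ≤ 3 := by
  unfold cub
  refine (MvPolynomial.totalDegree_add _ _).trans (max_le ((MvPolynomial.totalDegree_add _ _).trans
    (max_le ((MvPolynomial.totalDegree_add _ _).trans (max_le ?_ ?_)) ?_)) ?_)
  · refine (MvPolynomial.totalDegree_mul _ _).trans ?_
    have h1 := linP_deg (4*u0) (4*u1) (-4*(e0*u0+e1*u1))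
    have h2 := linP_deg (4*v0) (4*v1) (-4*(e0*v0+e1*v1))
    have h3 := linP_deg (4*w0) (4*w1) (-4*(e0*w0+e1*w1))
    have h4 := MvPolynomial.totalDegree_mul (linP (4*u0) (4*u1) (-4*(e0*u0+e1*u1)))
      (linP (4*v0) (4*v1) (-4*(e0*v0+e1*v1)))
    omega
  all_goals exact lin_deg_C _ _ _ _

lemma cub_eval (u0 u1 v0 v1 w0 w1 e0 e1 α β γ : ℝ) (P : EuclideanSpace ℝ (Fin 2))
    (l m n : ℝ) (hl : 4*((P 0 - e0)*u0+(P 1 - e1)*u1) = l)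
    (hm : 4*((P 0 - e0)*v0+(P 1 - e1)*v1) = m)
    (hn : 4*((P 0 - e0)*w0+(P 1 - e1)*w1) = n) :
    mvEval (cub u0 u1 v0 v1 w0 w1 e0 e1 α β γ) P =
      l*m*n + l*(β*γ) + m*(α*γ) + n*(α*β) := by
  subst hl hm hn
  simp only [mvEval, cub, linP, map_add, map_mul, MvPolynomial.eval_C, MvPolynomial.eval_X]
  ring

lemma dist_sq2 (P Q : EuclideanSpace ℝ (Fin 2)) :
    dist P Q ^ 2 = (P 0 - Q 0)^2 + (P 1 - Q 1)^2 := by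
  rw [EuclideanSpace.dist_eq, Real.sq_sqrt (by positivity)]
  simp [Fin.sum_univ_two, Real.dist_eq, sq_abs]

lemma nondeg (A B C : EuclideanSpace ℝ (Fin 2)) (h : AffineIndependent ℝ ![A, B, C]) :
    (B 0 - C 0) * (C 1 - A 1) - (B 1 - C 1) * (C 0 - A 0) ≠ 0 := by
  intro hD
  rw [affineIndependent_iff] at h
  have key : ∀ s t : ℝ, s * (B 0 - A 0) + t * (C 0 - A 0) = 0 →
      s * (B 1 - A 1) + t * (C 1 - A 1) = 0 → s = 0 ∧ t = 0 := by
    intro s t h0 h1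
    have := h Finset.univ ![-s-t, s, t] (by simp [Fin.sum_univ_three]; ring) (by
      simp only [Fin.sum_univ_three]
      ext i
      fin_cases i
      · simp; linear_combination h0
      · simp; linear_combination h1)
    exact ⟨by simpa using this 1 (Finset.mem_univ _), by simpa using this 2 (Finset.mem_univ _)⟩
  have h1 := key (C 1 - A 1) (-(B 1 - A 1)) (by linear_combination hD) (by ring)
  have h2 := key (C 0 - A 0) (-(B 0 - A 0)) (by ring) (by linear_combination -hD)
  have h3 := key 1 0 (by linarith [h2.2]) (by linarith [h1.2])
  exact one_ne_zero h3.1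

lemma mid_coord (P Q : EuclideanSpace ℝ (Fin 2)) (i : Fin 2) :
    (midpoint ℝ P Q) i = (P i + Q i) / 2 := by
  rw [midpoint_eq_smul_add]; simp; ring

lemma bary_coord (P Q R : EuclideanSpace ℝ (Fin 2)) (u v w : ℝ) (i : Fin 2) :
    (bary P Q R u v w) i = (u * P i + v * Q i + w * R i) / (u + v + w) := by
  simp [bary]; ring

lemma forms (A0 A1 B0 B1 C0 C1 O0 O1 b c : ℝ)
    (hb2 : b^2 = (C0 - A0)^2 + (C1 - A1)^2) (hc2 : c^2 = (A0 - B0)^2 + (A1 - B1)^2)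
    (o1 : (O0 - A0)^2 + (O1 - A1)^2 = (O0 - B0)^2 + (O1 - B1)^2)
    (o2 : (O0 - A0)^2 + (O1 - A1)^2 = (O0 - C0)^2 + (O1 - C1)^2) :
    2*((O0 - A0)*(B0 - C0) + (O1 - A1)*(B1 - C1)) = c^2 - b^2 ∧
    2*((O0 - A0)*(C0 - A0) + (O1 - A1)*(C1 - A1)) = b^2 ∧
    2*((O0 - A0)*(A0 - B0) + (O1 - A1)*(A1 - B1)) = -c^2 := by
  refine ⟨?_, ?_, ?_⟩
  · linear_combination o1 - o2 + hb2 - hc2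
  · linear_combination o2 - hb2
  · linear_combination -o1 + hc2

/-- the cubic is nonzero -/
lemma cub_ne (u0 u1 v0 v1 w0 w1 e0 e1 α β γ : ℝ) (hD : u0 * v1 - u1 * v0 ≠ 0)
    (hw0 : w0 = -u0 - v0) (hw1 : w1 = -u1 - v1) :
    cub u0 u1 v0 v1 w0 w1 e0 e1 α β γ ≠ 0 := by
  intro h
  obtain ⟨k, hk⟩ : ∃ k : ℝ, (u0*v1-u1*v0) * k = 1 := ⟨_, mul_inv_cancel₀ hD⟩
  have key : ∀ t : ℝ, t*t*(-2*t) + t*(β*γ) + t*(α*γ) + (-2*t)*(α*β) = 0 := by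
    intro t
    have := cub_eval u0 u1 v0 v1 w0 w1 e0 e1 α β γ
      (!₂[e0 + t/4*(v1-u1)*k, e1 + t/4*(u0-v0)*k])
      t t (-2*t) (by simp; linear_combination t * hk) (by simp; linear_combination t * hk)
      (by subst hw0 hw1; simp; linear_combination (-2 * t) * hk)
    rw [h] at this
    rw [← this]; simp [mvEval]
  have k1 := key 1
  have k2 := key 2
  linarith

set_option maxHeartbeats 4000000 in
theorem stmt3 (A B C O : EuclideanSpace ℝ (Fin 2))
    (hABC : AffineIndependent ℝ ![A, B, C])
    (a b c : ℝ) (ha : a = dist B C) (hb : b = dist C A) (hc : c = dist A B)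
    (M₁ M₂ M₃ H E Sp M₁' M₂' M₃' : EuclideanSpace ℝ (Fin 2))
    (hM₁ : M₁ = midpoint ℝ B C) (hM₂ : M₂ = midpoint ℝ C A)
    (hM₃ : M₃ = midpoint ℝ A B)
    (hO : dist O A = dist O B ∧ dist O A = dist O C)
    (hH : H = A + B + C - (2 : ℝ) • O)
    (hE : E = midpoint ℝ O H)
    (hSp : Sp = bary M₁ M₂ M₃ a b c)
    (hM₁' : M₁' = (2 : ℝ) • E - M₁)
    (hM₂' : M₂' = (2 : ℝ) • E - M₂)
    (hM₃' : M₃' = (2 : ℝ) • E - M₃) :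
    ∃ f : MvPolynomial (Fin 2) ℝ, f ≠ 0 ∧ f.totalDegree ≤ 3 ∧
      mvEval f M₁ = 0 ∧ mvEval f M₂ = 0 ∧ mvEval f M₃ = 0 ∧
      mvEval f M₁' = 0 ∧ mvEval f M₂' = 0 ∧ mvEval f M₃' = 0 ∧
      mvEval f Sp = 0 ∧ mvEval f E = 0 ∧ mvEval f O = 0 ∧ mvEval f H = 0 := by
  have hD := nondeg A B C hABC
  have ha2 := dist_sq2 B C
  have hb2 := dist_sq2 C A
  have hc2 := dist_sq2 A B
  have o1 : dist O A ^ 2 = dist O B ^ 2 := by rw [hO.1]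
  have o2 : dist O A ^ 2 = dist O C ^ 2 := by rw [hO.2]
  rw [dist_sq2, dist_sq2] at o1 o2
  rw [← ha] at ha2
  rw [← hb] at hb2
  rw [← hc] at hc2
  have hs : a + b + c ≠ 0 := by
    have ha0 : 0 ≤ a := ha ▸ dist_nonneg
    have hb0 : 0 ≤ b := hb ▸ dist_nonneg
    have hc0 : 0 ≤ c := hc ▸ dist_nonneg
    intro h
    have haz : a = 0 := by linarith
    rw [haz] at ha2
    have e0 : B 0 - C 0 = 0 := by nlinarith [sq_nonneg (B 0 - C 0), sq_nonneg (B 1 - C 1)]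
    have e1 : B 1 - C 1 = 0 := by nlinarith [sq_nonneg (B 0 - C 0), sq_nonneg (B 1 - C 1)]
    apply hD
    rw [e0, e1]; ring
  have cE : ∀ i, E i = (A i + B i + C i - O i) / 2 := by
    intro i; rw [hE, hH, mid_coord]; simp; ring
  have cH : ∀ i, H i = 2 * E i - O i := by
    intro i; rw [cE, hH]; simp; ring
  have c1 : ∀ i, M₁ i = E i + (O i - A i) / 2 := by
    intro i; rw [hM₁, mid_coord, cE]; ring
  have c2 : ∀ i, M₂ i = E i + (O i - B i) / 2 := by
    intro i; rw [hM₂, mid_coord, cE]; ring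
  have c3 : ∀ i, M₃ i = E i + (O i - C i) / 2 := by
    intro i; rw [hM₃, mid_coord, cE]; ring
  have c1' : ∀ i, M₁' i = 2 * E i - M₁ i := by intro i; rw [hM₁']; simp
  have c2' : ∀ i, M₂' i = 2 * E i - M₂ i := by intro i; rw [hM₂']; simp
  have c3' : ∀ i, M₃' i = 2 * E i - M₃ i := by intro i; rw [hM₃']; simp
  have cO : ∀ i, O i = E i + ((O i - A i) + (O i - B i) + (O i - C i)) / 2 := by
    intro i; rw [cE]; ring
  have cS : ∀ i, Sp i - E i =
      (a * (O i - A i) + b * (O i - B i) + c * (O i - C i)) / (2 * (a + b + c)) := by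
    intro i; rw [hSp, bary_coord, c1, c2, c3]; field_simp; ring
  obtain ⟨p1, p2, p3⟩ := forms _ _ _ _ _ _ _ _ b c hb2 hc2 o1 o2
  obtain ⟨q2, q3, q1⟩ := forms _ _ _ _ _ _ _ _ c a hc2 ha2 (o1.symm.trans o2) o1.symm
  obtain ⟨r3, r1, r2⟩ := forms _ _ _ _ _ _ _ _ a b ha2 hb2 o2.symm (o2.symm.trans o1)
  refine ⟨cub (B 0 - C 0) (B 1 - C 1) (C 0 - A 0) (C 1 - A 1) (A 0 - B 0) (A 1 - B 1)
    (E 0) (E 1) (a^2) (b^2) (c^2), cub_ne _ _ _ _ _ _ _ _ _ _ _ hD (by ring) (by ring),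
    cub_deg _ _ _ _ _ _ _ _ _ _ _, ?_, ?_, ?_, ?_, ?_, ?_, ?_, ?_, ?_, ?_⟩
  · rw [cub_eval (l := c^2-b^2) (m := b^2) (n := -c^2)]
    · ring
    · rw [c1, c1]; linear_combination p1
    · rw [c1, c1]; linear_combination p2
    · rw [c1, c1]; linear_combination p3
  · rw [cub_eval (l := -a^2) (m := a^2-c^2) (n := c^2)]
    · ring
    · rw [c2, c2]; linear_combination q1
    · rw [c2, c2]; linear_combination q2
    · rw [c2, c2]; linear_combination q3
  · rw [cub_eval (l := a^2) (m := -b^2) (n := b^2-a^2)]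
    · ring
    · rw [c3, c3]; linear_combination r1
    · rw [c3, c3]; linear_combination r2
    · rw [c3, c3]; linear_combination r3
  · rw [cub_eval (l := -(c^2-b^2)) (m := -b^2) (n := c^2)]
    · ring
    · rw [c1', c1', c1, c1]; linear_combination -p1
    · rw [c1', c1', c1, c1]; linear_combination -p2
    · rw [c1', c1', c1, c1]; linear_combination -p3
  · rw [cub_eval (l := a^2) (m := -(a^2-c^2)) (n := -c^2)]
    · ring
    · rw [c2', c2', c2, c2]; linear_combination -q1
    · rw [c2', c2', c2, c2]; linear_combination -q2
    · rw [c2', c2', c2, c2]; linear_combination -q3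
  · rw [cub_eval (l := -a^2) (m := b^2) (n := -(b^2-a^2))]
    · ring
    · rw [c3', c3', c3, c3]; linear_combination -r1
    · rw [c3', c3', c3, c3]; linear_combination -r2
    · rw [c3', c3', c3, c3]; linear_combination -r3
  · rw [cub_eval (l := a*(c-b)) (m := b*(a-c)) (n := c*(b-a))]
    · ring
    · rw [cS, cS]; field_simp; linear_combination 2*(a*p1 + b*q1 + c*r1)
    · rw [cS, cS]; field_simp; linear_combination 2*(a*p2 + b*q2 + c*r2)
    · rw [cS, cS]; field_simp; linear_combination 2*(a*p3 + b*q3 + c*r3)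
  · rw [cub_eval (l := 0) (m := 0) (n := 0)] <;> ring
  · rw [cub_eval (l := c^2-b^2) (m := a^2-c^2) (n := b^2-a^2)]
    · ring
    · rw [cE, cE]; linear_combination p1 + q1 + r1
    · rw [cE, cE]; linear_combination p2 + q2 + r2
    · rw [cE, cE]; linear_combination p3 + q3 + r3
  · rw [cub_eval (l := -(c^2-b^2)) (m := -(a^2-c^2)) (n := -(b^2-a^2))]
    · ring
    · rw [cH, cH, cE, cE]; linear_combination -p1 - q1 - r1
    · rw [cH, cH, cE, cE]; linear_combination -p2 - q2 - r2
    · rw [cH, cH, cE, cE]; linear_combination -p3 - q3 - r3
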